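/- Let E be a real inner product space, Π ⊆ E a nonempty convex set, w > 0, and g, ĝ ∈ E. Let R, R' : E → ℝ be differentiable with gradients ∇R, ∇R', and assume R' is α-strongly convex on E with α > 0. Let π̂, π₊, π̂₊ ∈ Π satisfy: (i) ⟪w·ĝ + ∇R(π₊) − ∇R(π̂), π₊ − π⟫ ≤ 0 for all π ∈ Π (prediction-step optimality), and (ii) ⟪w·(g − ĝ) + ∇R'(π̂₊) − ∇R'(π₊), π̂₊ − π⟫ ≤ 0 for all π ∈ Π (correction-step optimality). Then for every π ∈ Π: w·⟪g, π₊ − π⟫ ≤ B_R(π‖π̂) − B_R(π‖π₊) − B_R(π₊‖π̂) + B_{R'}(π‖π₊) − B_{R'}(π‖π̂₊) + (w²/(2α))·‖g − ĝ‖². -/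

import Mathlib

open scoped RealInnerProductSpace

/-- Bregman divergence `B_R(z‖x) = R z − R x − ⟪∇R x, z − x⟫` generated by `R`
with gradient field `gradR`. -/
noncomputable def breg {E : Type*} [NormedAddCommGroup E] [InnerProductSpace ℝ E]
    (R : E → ℝ) (gradR : E → E) (z x : E) : ℝ :=
  R z - R x - ⟪gradR x, z - x⟫

/-- `F` is `α`-strongly convex on the set `K`. -/
def StrongConvexOnSet {E : Type*} [NormedAddCommGroup E] [NormedSpace ℝ E]
    (K : Set E) (α : ℝ) (F : E → ℝ) : Prop :=
  ∀ ⦃x⦄, x ∈ K → ∀ ⦃y⦄, y ∈ K → ∀ ⦃t : ℝ⦄, 0 ≤ t → t ≤ 1 →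
    F (t • x + (1 - t) • y) ≤ t * F x + (1 - t) * F y - α / 2 * t * (1 - t) * ‖x - y‖ ^ 2

/-!
Both steps are mirror-descent steps: the prediction step is driven by `w • ĝ`, and the correction
step, started at `π₊`, by `w • (g - ĝ)`. Their regrets against `π`, measured at `π₊`, add up to
`w * ⟪g, π₊ - π⟫`. The optimality condition of the prediction step bounds its regret exactly where
we need it, at the new point `π₊`. The correction step is instead bounded at its starting point
`π₊`; moving there from `π̂₊` costs `⟪w • (g - ĝ), π₊ - π̂₊⟫`, which Young's inequality splits into
the error term and `α / 2 * ‖π₊ - π̂₊‖ ^ 2`, and strong convexity pays for the latter with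
`B_{R'}(π̂₊‖π₊)`.
-/

section MirrorDescent

variable {E : Type*} [NormedAddCommGroup E]

theorem StrongConvexOnSet.slope_le [NormedSpace ℝ E] {K : Set E} {α : ℝ} {F : E → ℝ}
    (hF : StrongConvexOnSet K α F) {x y : E} (hx : x ∈ K) (hy : y ∈ K)
    {t : ℝ} (ht₀ : 0 < t) (ht₁ : t ≤ 1) :
    t⁻¹ • (F (x + t • (y - x)) - F x) ≤ F y - F x - α / 2 * (1 - t) * ‖y - x‖ ^ 2 := by
  have hsegment : t • y + (1 - t) • x = x + t • (y - x) := by module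
  have hconvex := hF hy hx ht₀.le ht₁
  rw [hsegment] at hconvex
  rw [smul_eq_mul, inv_mul_le_iff₀ ht₀]
  linarith

variable [InnerProductSpace ℝ E]

theorem StrongConvexOnSet.le_breg {K : Set E} {α : ℝ} {F : E → ℝ} {gradF : E → E}
    (hF : StrongConvexOnSet K α F) {x y : E} (hx : x ∈ K) (hy : y ∈ K)
    (hgrad : HasFDerivAt F (innerSL ℝ (gradF x)) x) :
    α / 2 * ‖y - x‖ ^ 2 ≤ breg F gradF y x := by
  have hslope : Filter.Tendsto (fun t : ℝ ↦ t⁻¹ • (F (x + t • (y - x)) - F x))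
      (nhdsWithin 0 (Set.Ioi 0)) (nhds ⟪gradF x, y - x⟫) :=
    (hgrad.hasLineDerivAt (y - x)).tendsto_slope_zero_right
  have hbound : Filter.Tendsto (fun t : ℝ ↦ F y - F x - α / 2 * (1 - t) * ‖y - x‖ ^ 2)
      (nhdsWithin 0 (Set.Ioi 0)) (nhds (F y - F x - α / 2 * (1 - 0) * ‖y - x‖ ^ 2)) :=
    (Continuous.tendsto (by fun_prop) 0).mono_left nhdsWithin_le_nhds
  have hlimit : ⟪gradF x, y - x⟫ ≤ F y - F x - α / 2 * (1 - 0) * ‖y - x‖ ^ 2 := by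
    refine le_of_tendsto_of_tendsto hslope hbound ?_
    filter_upwards [Ioc_mem_nhdsGT (zero_lt_one (α := ℝ))] with t ht
    exact hF.slope_le hx hy ht.1 ht.2
  unfold breg
  linarith

theorem inner_gradient_sub_eq_breg (F : E → ℝ) (gradF : E → E) (x p z : E) :
    ⟪gradF x - gradF p, p - z⟫ = breg F gradF z x - breg F gradF z p - breg F gradF p x := by
  simp only [breg, inner_sub_left, inner_sub_right]
  ring

theorem inner_le_breg_of_inner_nonpos (F : E → ℝ) {gradF : E → E} {v x p z : E}
    (hopt : ⟪v + gradF p - gradF x, p - z⟫ ≤ 0) :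
    ⟪v, p - z⟫ ≤ breg F gradF z x - breg F gradF z p - breg F gradF p x := by
  rw [← inner_gradient_sub_eq_breg, ← sub_nonpos, ← inner_sub_left]
  rwa [← sub_add, sub_add_eq_add_sub]

theorem inner_le_norm_sq_div_add_mul_norm_sq {α : ℝ} (hα : 0 < α) (u v : E) :
    ⟪u, v⟫ ≤ ‖u‖ ^ 2 / (2 * α) + α / 2 * ‖v‖ ^ 2 := by
  calc
    ⟪u, v⟫ ≤ ‖u‖ * ‖v‖ := real_inner_le_norm u v
    _ = 2 * ‖v‖ * ‖u‖ / 2 := by ring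
    _ ≤ (α * ‖v‖ ^ 2 + α⁻¹ * ‖u‖ ^ 2) / 2 := by gcongr; exact two_mul_le_add_mul_sq hα
    _ = ‖u‖ ^ 2 / (2 * α) + α / 2 * ‖v‖ ^ 2 := by ring

theorem StrongConvexOnSet.inner_le_breg_add_of_inner_nonpos {K : Set E} {α : ℝ} {F : E → ℝ}
    {gradF : E → E} (hF : StrongConvexOnSet K α F) (hα : 0 < α) {v x p z : E}
    (hx : x ∈ K) (hp : p ∈ K) (hgrad : HasFDerivAt F (innerSL ℝ (gradF x)) x)
    (hopt : ⟪v + gradF p - gradF x, p - z⟫ ≤ 0) :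
    ⟪v, x - z⟫ ≤ breg F gradF z x - breg F gradF z p + ‖v‖ ^ 2 / (2 * α) := by
  have hregret : ⟪v, p - z⟫ ≤ breg F gradF z x - breg F gradF z p - breg F gradF p x :=
    inner_le_breg_of_inner_nonpos F hopt
  have hmove : ⟪v, x - p⟫ ≤ ‖v‖ ^ 2 / (2 * α) + breg F gradF p x := by
    calc
      ⟪v, x - p⟫ ≤ ‖v‖ ^ 2 / (2 * α) + α / 2 * ‖x - p‖ ^ 2 :=
        inner_le_norm_sq_div_add_mul_norm_sq hα v (x - p)
      _ ≤ ‖v‖ ^ 2 / (2 * α) + breg F gradF p x := by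
        rw [norm_sub_rev]
        gcongr
        exact hF.le_breg hx hp hgrad
  calc
    ⟪v, x - z⟫ = ⟪v, p - z⟫ + ⟪v, x - p⟫ := by
      rw [← inner_add_right, add_comm, sub_add_sub_cancel]
    _ ≤ breg F gradF z x - breg F gradF z p + ‖v‖ ^ 2 / (2 * α) := by linarith

theorem piccolo_one_step_inequality_general {Pset : Set E} {w : ℝ} {g ghat : E}
    {R R' : E → ℝ} {gradR gradR' : E → E} {α : ℝ} (hα : 0 < α)
    (hsc : StrongConvexOnSet Pset α R') {πh πp πhp : E} (hπp : πp ∈ Pset) (hπhp : πhp ∈ Pset)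
    (hR_πh : HasFDerivAt R (innerSL ℝ (gradR πh)) πh)
    (hR_πp : HasFDerivAt R (innerSL ℝ (gradR πp)) πp)
    (hR'_πp : HasFDerivAt R' (innerSL ℝ (gradR' πp)) πp)
    (hR'_πhp : HasFDerivAt R' (innerSL ℝ (gradR' πhp)) πhp)
    (hpred : ∀ π ∈ Pset, ⟪w • ghat + gradR πp - gradR πh, πp - π⟫ ≤ 0)
    (hcorr : ∀ π ∈ Pset, ⟪w • (g - ghat) + gradR' πhp - gradR' πp, πhp - π⟫ ≤ 0) :
    ∀ π ∈ Pset,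
      w * ⟪g, πp - π⟫ ≤
        breg R gradR π πh - breg R gradR π πp - breg R gradR πp πh
          + breg R' gradR' π πp - breg R' gradR' π πhp
          + w ^ 2 / (2 * α) * ‖g - ghat‖ ^ 2 := by
  intro π hπ
  have hprediction := inner_le_breg_of_inner_nonpos R (hpred π hπ)
  have hcorrection := hsc.inner_le_breg_add_of_inner_nonpos hα hπp hπhp hR'_πp (hcorr π hπ)
  have herror : ‖w • (g - ghat)‖ ^ 2 / (2 * α) = w ^ 2 / (2 * α) * ‖g - ghat‖ ^ 2 := by
    rw [norm_smul, mul_pow, Real.norm_eq_abs, sq_abs, mul_div_right_comm]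
  calc
    w * ⟪g, πp - π⟫ = ⟪w • ghat, πp - π⟫ + ⟪w • (g - ghat), πp - π⟫ := by
      rw [← inner_add_left, ← smul_add, add_sub_cancel, real_inner_smul_left]
    _ ≤ _ := by linarith

end MirrorDescent

/-- One-step inequality of the PicCoLO Prediction–Correction scheme with a
mirror-descent base algorithm.  Here `πh` is `π̂`, `πp` is `π₊` (the
Prediction-Step output), and `πhp` is `π̂₊` (the Correction-Step output). -/
theorem piccolo_one_step_inequality
    {E : Type*} [NormedAddCommGroup E] [InnerProductSpace ℝ E]
    (Pset : Set E) (hne : Pset.Nonempty) (hconv : Convex ℝ Pset)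
    (w : ℝ) (hw : 0 < w) (g ghat : E)
    (R R' : E → ℝ) (gradR gradR' : E → E)
    (hR : ∀ p : E, HasFDerivAt R (innerSL ℝ (gradR p)) p)
    (hR' : ∀ p : E, HasFDerivAt R' (innerSL ℝ (gradR' p)) p)
    (α : ℝ) (hα : 0 < α) (hsc : StrongConvexOnSet (Set.univ : Set E) α R')
    (πh πp πhp : E) (hπh : πh ∈ Pset) (hπp : πp ∈ Pset) (hπhp : πhp ∈ Pset)
    (hpred : ∀ π ∈ Pset, ⟪w • ghat + gradR πp - gradR πh, πp - π⟫ ≤ 0)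
    (hcorr : ∀ π ∈ Pset, ⟪w • (g - ghat) + gradR' πhp - gradR' πp, πhp - π⟫ ≤ 0) :
    ∀ π ∈ Pset,
      w * ⟪g, πp - π⟫ ≤
        breg R gradR π πh - breg R gradR π πp - breg R gradR πp πh
          + breg R' gradR' π πp - breg R' gradR' π πhp
          + w ^ 2 / (2 * α) * ‖g - ghat‖ ^ 2 := by
  exact piccolo_one_step_inequality_general hα
    (fun _ _ _ _ _ ht₀ ht₁ ↦ hsc (Set.mem_univ _) (Set.mem_univ _) ht₀ ht₁) hπp hπhp
    (hR πh) (hR πp) (hR' πp) (hR' πhp) hpred hcorr
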